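/- arXiv:1510.03044 — 3 statements merged into one kernel-verified Lean document; each statement's English description precedes it below -/
import Mathlib

section
/- Let n ≥ 2. Let Y_c and L be real symmetric n×n matrices with nonpositive off-diagonal entries and zero row sums (weighted graph Laplacians), each of rank n−1 (connected graphs). Suppose there are no shunt conductances, i.e. Y = Y_c (singular). Let D, R, Υ, Ψ be diagonal matrices with strictly positive diagonal entries and Φ a diagonal matrix with nonnegative diagonal entries. Then the closed-loop matrix A_c satisfies rank(A_c) = 2n − 1 and rank(A_c²) = 2n − 1; that is, 0 is a semisimple eigenvalue of A_c of algebraic multiplicity one, and the kernel of A_c is spanned by the vector (0, 1ₙ) ∈ ℝ^{2n}. -/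
open Matrix

/-!
With `K = Φ L Υ⁻¹`, left multiplication by the invertible matrix `[[1, 0], [-K, 1]]` turns the
purely integral loop (`Φ = 0`) into the general one, so the kernel does not depend on `Φ`:
`A_c (x, y) = 0` means `(1 + Y R) x = Y y` and `L Υ⁻¹ x = 0`. The second equation gives `x = c Υ 1`;
pairing the first with `1` gives `1ᵀ x = 0`, hence `c = 0`, `x = 0` and `Y y = 0`, so `y` is
constant.

For the square, `(1ᵀ Ψ⁻¹ K, 1ᵀ Ψ⁻¹)` is a left null vector of `A_c` whose pairing with the right
null vector `(0, 1)` is `1ᵀ Ψ⁻¹ 1 ≠ 0`. So `(0, 1)` is not in the range of `A_c`, which excludes a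
nontrivial Jordan block at `0`.
-/

section NullVectors

variable {m ι K : Type*} [Fintype ι] [Field K]

theorem ker_mulVecLin_eq_span_singleton_iff {M : Matrix m ι K} {v : ι → K}
    (hv : v ≠ 0) (hMv : M *ᵥ v = 0) :
    LinearMap.ker M.mulVecLin = K ∙ v ↔ M.rank + 1 = Fintype.card ι := by
  have rank_nullity : M.rank + Module.finrank K (LinearMap.ker M.mulVecLin) = Fintype.card ι :=
    M.mulVecLin.finrank_range_add_finrank_ker.trans (Module.finrank_fintype_fun_eq_card K)
  constructor
  · intro hker
    rwa [hker, finrank_span_singleton hv] at rank_nullity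
  · intro hrank
    have hle : K ∙ v ≤ LinearMap.ker M.mulVecLin := by
      rwa [Submodule.span_singleton_le_iff_mem, LinearMap.mem_ker, mulVecLin_apply]
    refine (Submodule.eq_of_le_of_finrank_eq hle ?_).symm
    rw [finrank_span_singleton hv]
    omega

theorem ker_mulVecLin_mul_self_of_dotProduct_ne_zero {A : Matrix ι ι K} {v w : ι → K}
    (hker : LinearMap.ker A.mulVecLin = K ∙ v) (hwA : w ᵥ* A = 0) (hwv : w ⬝ᵥ v ≠ 0) :
    LinearMap.ker (A * A).mulVecLin = LinearMap.ker A.mulVecLin := by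
  ext u
  simp only [LinearMap.mem_ker, mulVecLin_apply, ← mulVec_mulVec]
  refine ⟨fun hu => ?_, fun hu => by rw [hu, mulVec_zero]⟩
  obtain ⟨c, hc⟩ : ∃ c : K, c • v = A *ᵥ u := by
    rwa [← Submodule.mem_span_singleton, ← hker, LinearMap.mem_ker, mulVecLin_apply]
  have hcwv : c * (w ⬝ᵥ v) = 0 := by
    rw [← smul_eq_mul, ← dotProduct_smul, hc, dotProduct_mulVec, hwA, zero_dotProduct]
  rw [← hc, (mul_eq_zero.1 hcwv).resolve_right hwv, zero_smul]

end NullVectors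

theorem mulVec_eq_zero_iff_of_isUnit {ι R : Type*} [Fintype ι] [DecidableEq ι] [CommRing R]
    {A : Matrix ι ι R} (hA : IsUnit A) {v : ι → R} : A *ᵥ v = 0 ↔ v = 0 :=
  map_eq_zero_iff A.mulVecLin (mulVec_injective_of_isUnit hA)

section BalancedLaplacian

variable {ι K : Type*} [Fintype ι] [Field K]

/-- The algebraic properties of the Laplacian of a connected weight-balanced digraph, with
weights in any field: row and column sums vanish and the corank is one. -/
structure IsBalancedLaplacian (M : Matrix ι ι K) : Prop where
  mulVec_one : M *ᵥ 1 = 0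
  one_vecMul : 1 ᵥ* M = 0
  rank_add_one : M.rank + 1 = Fintype.card ι

theorem isBalancedLaplacian_of_isSymm {M : Matrix ι ι K} (hsymm : M.IsSymm)
    (hrow : ∀ i, ∑ j, M i j = 0) (hrank : M.rank + 1 = Fintype.card ι) :
    IsBalancedLaplacian M := by
  have hM : M *ᵥ 1 = 0 := funext fun i => (dotProduct_one _).trans (hrow i)
  refine ⟨hM, ?_, hrank⟩
  rw [← mulVec_transpose, hsymm.eq, hM]

theorem IsBalancedLaplacian.ker_mulVecLin {M : Matrix ι ι K} (hM : IsBalancedLaplacian M) :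
    LinearMap.ker M.mulVecLin = K ∙ (1 : ι → K) := by
  have : Nonempty ι := Fintype.card_pos_iff.1 (by have := hM.rank_add_one; omega)
  exact (ker_mulVecLin_eq_span_singleton_iff one_ne_zero hM.mulVec_one).2 hM.rank_add_one

end BalancedLaplacian

section ClosedLoop

variable {ι K : Type*} [Fintype ι] [DecidableEq ι] [Field K]
variable {D R Y Υ Ψ Φ L : Matrix ι ι K}

/-- The closed-loop matrix `A_c` of the microgrid, with arbitrary square matrices as coefficients;
`D⁻¹` and `Υ⁻¹` take the junk value `0` on singular matrices. -/
noncomputable def closedLoop (D R Y Υ Ψ Φ L : Matrix ι ι K) : Matrix (ι ⊕ ι) (ι ⊕ ι) K :=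
  fromBlocks
    (-(D⁻¹ * (1 + Y * R))) (D⁻¹ * Y)
    (-(Ψ * L * Υ⁻¹) + Φ * L * Υ⁻¹ * D⁻¹ * (1 + Y * R)) (-(Φ * L * Υ⁻¹ * D⁻¹ * Y))

theorem closedLoop_eq_fromBlocks_mul_closedLoop_zero (D R Y Υ Ψ Φ L : Matrix ι ι K) :
    closedLoop D R Y Υ Ψ Φ L =
      fromBlocks 1 0 (-(Φ * L * Υ⁻¹)) 1 * closedLoop D R Y Υ Ψ 0 L := by
  simp [closedLoop, fromBlocks_multiply, mul_assoc, add_comm]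

theorem closedLoop_zero_mulVec (D R Y Υ Ψ L : Matrix ι ι K) (x y : ι → K) :
    closedLoop D R Y Υ Ψ 0 L *ᵥ Sum.elim x y =
      Sum.elim (D⁻¹ *ᵥ (Y *ᵥ y - (x + Y *ᵥ (R *ᵥ x)))) (Ψ *ᵥ -(L *ᵥ (Υ⁻¹ *ᵥ x))) := by
  rw [closedLoop, fromBlocks_mulVec, Sum.elim_comp_inl, Sum.elim_comp_inr]
  congr 1
  · simp only [neg_mulVec, ← mulVec_mulVec, add_mulVec, one_mulVec, mulVec_sub]
    abel
  · simp [neg_mulVec, ← mulVec_mulVec, mulVec_neg]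

theorem closedLoop_mulVec_eq_zero_iff (hD : IsUnit D) (hΨ : IsUnit Ψ) (x y : ι → K) :
    closedLoop D R Y Υ Ψ Φ L *ᵥ Sum.elim x y = 0 ↔
      x + Y *ᵥ (R *ᵥ x) = Y *ᵥ y ∧ L *ᵥ (Υ⁻¹ *ᵥ x) = 0 := by
  have hfactor : IsUnit (fromBlocks 1 0 (-(Φ * L * Υ⁻¹)) 1) :=
    isUnit_fromBlocks_zero₁₂.2 ⟨isUnit_one, isUnit_one⟩
  rw [closedLoop_eq_fromBlocks_mul_closedLoop_zero, ← mulVec_mulVec,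
    mulVec_eq_zero_iff_of_isUnit hfactor, closedLoop_zero_mulVec, ← Sum.elim_zero_zero,
    Sum.elim_eq_iff, mulVec_eq_zero_iff_of_isUnit (isUnit_nonsing_inv_iff.2 hD),
    mulVec_eq_zero_iff_of_isUnit hΨ, sub_eq_zero, neg_eq_zero, eq_comm (a := Y *ᵥ y)]

theorem eq_zero_of_closedLoop_mulVec_eq_zero (hD : IsUnit D) (hΥ : IsUnit Υ) (hΨ : IsUnit Ψ)
    (hΥ_sum : 1 ⬝ᵥ Υ *ᵥ 1 ≠ 0) (hY : 1 ᵥ* Y = 0)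
    (hL : LinearMap.ker L.mulVecLin = K ∙ (1 : ι → K)) {x y : ι → K}
    (hxy : closedLoop D R Y Υ Ψ Φ L *ᵥ Sum.elim x y = 0) : x = 0 := by
  obtain ⟨htop, hbot⟩ := (closedLoop_mulVec_eq_zero_iff hD hΨ x y).1 hxy
  obtain ⟨c, hc⟩ : ∃ c : K, c • (1 : ι → K) = Υ⁻¹ *ᵥ x := by
    rwa [← Submodule.mem_span_singleton, ← hL, LinearMap.mem_ker, mulVecLin_apply]
  have hx : x = c • Υ *ᵥ 1 := by
    rw [← mulVec_smul, hc, mulVec_mulVec, mul_nonsing_inv _ ((isUnit_iff_isUnit_det Υ).1 hΥ),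
      one_mulVec]
  have hsum : 1 ⬝ᵥ x = 0 :=
    calc 1 ⬝ᵥ x = 1 ⬝ᵥ Y *ᵥ (y - R *ᵥ x) := by rw [mulVec_sub, ← htop, add_sub_cancel_right]
      _ = 0 := by rw [dotProduct_mulVec, hY, zero_dotProduct]
  have hc0 : c = 0 := by
    rw [hx, dotProduct_smul, smul_eq_mul] at hsum
    exact (mul_eq_zero.1 hsum).resolve_right hΥ_sum
  rw [hx, hc0, zero_smul]

theorem sumElim_vecMul_closedLoop_eq_zero (hΨ : IsUnit Ψ) (hL : 1 ᵥ* L = 0) :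
    Sum.elim ((1 ᵥ* Ψ⁻¹) ᵥ* (Φ * L * Υ⁻¹)) (1 ᵥ* Ψ⁻¹) ᵥ* closedLoop D R Y Υ Ψ Φ L = 0 := by
  have hcancel : (1 ᵥ* Ψ⁻¹) ᵥ* (Ψ * L * Υ⁻¹) = 0 := by
    rw [mul_assoc, vecMul_vecMul, nonsing_inv_mul_cancel_left _ _ ((isUnit_iff_isUnit_det Ψ).1 hΨ),
      ← vecMul_vecMul, hL, zero_vecMul]
  rw [closedLoop_eq_fromBlocks_mul_closedLoop_zero, ← vecMul_vecMul]
  simp [closedLoop, vecMul_fromBlocks, vecMul_neg, hcancel]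

variable (R Φ)

theorem ker_closedLoop (hD : IsUnit D) (hΥ : IsUnit Υ) (hΨ : IsUnit Ψ)
    (hΥ_sum : 1 ⬝ᵥ Υ *ᵥ 1 ≠ 0) (hY : IsBalancedLaplacian Y)
    (hL : LinearMap.ker L.mulVecLin = K ∙ (1 : ι → K)) :
    LinearMap.ker (closedLoop D R Y Υ Ψ Φ L).mulVecLin =
      K ∙ Sum.elim (0 : ι → K) (1 : ι → K) := by
  apply le_antisymm
  · intro v hv
    obtain ⟨x, y, rfl⟩ : ∃ x y, v = Sum.elim x y := ⟨_, _, (Sum.elim_comp_inl_inr v).symm⟩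
    obtain rfl : x = 0 := eq_zero_of_closedLoop_mulVec_eq_zero hD hΥ hΨ hΥ_sum hY.one_vecMul hL hv
    have hYy : Y *ᵥ y = 0 := by
      simpa using ((closedLoop_mulVec_eq_zero_iff hD hΨ 0 y).1 hv).1.symm
    obtain ⟨c, rfl⟩ : ∃ c : K, c • (1 : ι → K) = y := by
      rwa [← Submodule.mem_span_singleton, ← hY.ker_mulVecLin, LinearMap.mem_ker, mulVecLin_apply]
    exact Submodule.mem_span_singleton.2 ⟨c, by ext (i | i) <;> simp⟩
  · rw [Submodule.span_singleton_le_iff_mem, LinearMap.mem_ker, mulVecLin_apply,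
      closedLoop_mulVec_eq_zero_iff hD hΨ]
    simp [hY.mulVec_one]

theorem ker_closedLoop_mul_self (hD : IsUnit D) (hΥ : IsUnit Υ) (hΨ : IsUnit Ψ)
    (hΥ_sum : 1 ⬝ᵥ Υ *ᵥ 1 ≠ 0) (hΨ_sum : 1 ⬝ᵥ Ψ⁻¹ *ᵥ 1 ≠ 0)
    (hY : IsBalancedLaplacian Y) (hL : IsBalancedLaplacian L) :
    LinearMap.ker (closedLoop D R Y Υ Ψ Φ L * closedLoop D R Y Υ Ψ Φ L).mulVecLin =
      LinearMap.ker (closedLoop D R Y Υ Ψ Φ L).mulVecLin := by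
  refine ker_mulVecLin_mul_self_of_dotProduct_ne_zero
    (ker_closedLoop R Φ hD hΥ hΨ hΥ_sum hY hL.ker_mulVecLin)
    (sumElim_vecMul_closedLoop_eq_zero hΨ hL.one_vecMul) ?_
  rwa [sumElim_dotProduct_sumElim, dotProduct_zero, zero_add, ← dotProduct_mulVec]

theorem closedLoop_rank_no_shunt_general (hD : IsUnit D) (hΥ : IsUnit Υ) (hΨ : IsUnit Ψ)
    (hΥ_sum : 1 ⬝ᵥ Υ *ᵥ 1 ≠ 0) (hΨ_sum : 1 ⬝ᵥ Ψ⁻¹ *ᵥ 1 ≠ 0)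
    (hY : IsBalancedLaplacian Y) (hL : IsBalancedLaplacian L) :
    (closedLoop D R Y Υ Ψ Φ L).rank = 2 * Fintype.card ι - 1 ∧
      (closedLoop D R Y Υ Ψ Φ L * closedLoop D R Y Υ Ψ Φ L).rank = 2 * Fintype.card ι - 1 ∧
      ∀ v : ι ⊕ ι → K, closedLoop D R Y Υ Ψ Φ L *ᵥ v = 0 ↔
        ∃ c : K, v = c • Sum.elim (0 : ι → K) (fun _ => (1 : K)) := by
  have hker := ker_closedLoop R Φ hD hΥ hΨ hΥ_sum hY hL.ker_mulVecLin
  have hker_sq :=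
    (ker_closedLoop_mul_self R Φ hD hΥ hΨ hΥ_sum hΨ_sum hY hL).trans hker
  have rank_of_ker {M : Matrix (ι ⊕ ι) (ι ⊕ ι) K}
      (hM : LinearMap.ker M.mulVecLin = K ∙ Sum.elim (0 : ι → K) (1 : ι → K)) :
      M.rank = 2 * Fintype.card ι - 1 := by
    have hne : Sum.elim (0 : ι → K) (1 : ι → K) ≠ 0 := by
      rw [← Sum.elim_zero_zero, Ne, Sum.elim_eq_iff]
      rintro ⟨-, h⟩
      simp [h] at hΥ_sum
    have hnull : M *ᵥ Sum.elim (0 : ι → K) (1 : ι → K) = 0 := by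
      rw [← mulVecLin_apply, ← LinearMap.mem_ker, hM]
      exact Submodule.mem_span_singleton_self _
    have hrank := (ker_mulVecLin_eq_span_singleton_iff hne hnull).1 hM
    rw [Fintype.card_sum] at hrank
    omega
  refine ⟨rank_of_ker hker, rank_of_ker hker_sq, fun v => ?_⟩
  rw [← mulVecLin_apply, ← LinearMap.mem_ker, hker, Submodule.mem_span_singleton]
  exact exists_congr fun c => eq_comm

end ClosedLoop

section Diagonal

variable {ι K : Type*} [Fintype ι] [DecidableEq ι] [Field K] {d : ι → K}

theorem isUnit_diagonal_of_ne_zero (hd : ∀ i, d i ≠ 0) : IsUnit (diagonal d) :=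
  isUnit_diagonal.2 (Pi.isUnit_iff.2 fun i => (hd i).isUnit)

theorem inv_diagonal_of_ne_zero (hd : ∀ i, d i ≠ 0) : (diagonal d)⁻¹ = diagonal d⁻¹ := by
  refine inv_eq_right_inv ?_
  rw [diagonal_mul_diagonal, ← diagonal_one]
  exact congrArg diagonal (funext fun i => mul_inv_cancel₀ (hd i))

variable [LinearOrder K] [IsStrictOrderedRing K] [Nonempty ι]

theorem one_dotProduct_diagonal_mulVec_one_pos (hd : ∀ i, 0 < d i) :
    0 < 1 ⬝ᵥ diagonal d *ᵥ 1 := by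
  simpa [one_dotProduct, mulVec_diagonal] using
    Finset.sum_pos (fun i _ => hd i) Finset.univ_nonempty

theorem one_dotProduct_inv_diagonal_mulVec_one_pos (hd : ∀ i, 0 < d i) :
    0 < 1 ⬝ᵥ (diagonal d)⁻¹ *ᵥ 1 := by
  rw [inv_diagonal_of_ne_zero fun i => (hd i).ne']
  exact one_dotProduct_diagonal_mulVec_one_pos fun i => inv_pos.2 (hd i)

end Diagonal

/-- With no shunt conductances (`Y = Y_c` singular), the closed-loop
matrix `A_c` has `rank(A_c) = rank(A_c²) = 2n − 1`, so `0` is a semisimple eigenvalue of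
algebraic multiplicity one, and the kernel of `A_c` is spanned by `(0, 1ₙ)`. -/
theorem closedLoop_rank_no_shunt
    (n : ℕ) (hn : 2 ≤ n)
    (Yc L : Matrix (Fin n) (Fin n) ℝ)
    (hYcsym : Yc.IsSymm) (hLsym : L.IsSymm)
    (hYcoff : ∀ i j, i ≠ j → Yc i j ≤ 0) (hLoff : ∀ i j, i ≠ j → L i j ≤ 0)
    (hYcrow : ∀ i, ∑ j, Yc i j = 0) (hLrow : ∀ i, ∑ j, L i j = 0)
    (hYcrank : Yc.rank = n - 1) (hLrank : L.rank = n - 1)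
    (Y : Matrix (Fin n) (Fin n) ℝ) (hY : Y = Yc)
    (d r υ ψv φv : Fin n → ℝ)
    (hd : ∀ i, 0 < d i) (hr : ∀ i, 0 < r i) (hυ : ∀ i, 0 < υ i)
    (hψ : ∀ i, 0 < ψv i) (hφ : ∀ i, 0 ≤ φv i)
    (D R Υ Ψ Φ : Matrix (Fin n) (Fin n) ℝ)
    (hD : D = Matrix.diagonal d) (hR : R = Matrix.diagonal r)
    (hΥ : Υ = Matrix.diagonal υ) (hΨ : Ψ = Matrix.diagonal ψv)
    (hΦ : Φ = Matrix.diagonal φv)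
    (A_c : Matrix (Fin n ⊕ Fin n) (Fin n ⊕ Fin n) ℝ)
    (hA : A_c = Matrix.fromBlocks
      (-(D⁻¹ * (1 + Y * R))) (D⁻¹ * Y)
      (-(Ψ * L * Υ⁻¹) + Φ * L * Υ⁻¹ * D⁻¹ * (1 + Y * R)) (-(Φ * L * Υ⁻¹ * D⁻¹ * Y))) :
    A_c.rank = 2 * n - 1 ∧ (A_c * A_c).rank = 2 * n - 1 ∧
      (∀ v : Fin n ⊕ Fin n → ℝ, A_c *ᵥ v = 0 ↔
        ∃ c : ℝ, v = c • Sum.elim (0 : Fin n → ℝ) (fun _ => (1 : ℝ))) := by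
  obtain rfl : A_c = closedLoop D R Y Υ Ψ Φ L := hA
  subst hY hD hR hΥ hΨ hΦ
  have : Nonempty (Fin n) := ⟨⟨0, by omega⟩⟩
  have hcard : n - 1 + 1 = Fintype.card (Fin n) := by rw [Fintype.card_fin]; omega
  simpa only [Fintype.card_fin] using
    closedLoop_rank_no_shunt_general (diagonal r) (diagonal φv)
      (isUnit_diagonal_of_ne_zero fun i => (hd i).ne')
      (isUnit_diagonal_of_ne_zero fun i => (hυ i).ne')
      (isUnit_diagonal_of_ne_zero fun i => (hψ i).ne')
      (one_dotProduct_diagonal_mulVec_one_pos hυ).ne'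
      (one_dotProduct_inv_diagonal_mulVec_one_pos hψ).ne'
      (isBalancedLaplacian_of_isSymm hYcsym hYcrow (hYcrank ▸ hcard))
      (isBalancedLaplacian_of_isSymm hLsym hLrow (hLrank ▸ hcard))
end

section
/- Let n ≥ 1, let Y be an invertible real n×n matrix, let L be a real symmetric n×n matrix with L·1ₙ = 0, and let D, R, Υ, Φ, Ψ be real diagonal n×n matrices with D, Υ, Ψ invertible. Define v_r = (Υ·1ₙ, (Y⁻¹ + R)·Υ·1ₙ) ∈ ℝ^{2n} and v_l = (Υ⁻¹LΦΨ⁻¹·1ₙ, Ψ⁻¹·1ₙ) ∈ ℝ^{2n}. Then A_c·v_r = 0 and A_cᵀ·v_l = 0; that is, v_r is a right eigenvector and v_l a left eigenvector of the closed-loop matrix A_c associated with the eigenvalue 0. -/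
open Matrix

/-!
With `K = Φ L Υ⁻¹`, the closed-loop matrix factors as
`A_c = [[1, 0], [-K, 1]] * [[-D⁻¹(1 + YR), D⁻¹Y], [-ΨLΥ⁻¹, 0]]`. On the right, `v_r` is annihilated
by the second factor because `Y(Y⁻¹ + R) = 1 + YR` and `L 1ₙ = 0`. On the left, the first factor
sends `v_lᵀ` to `(0, 1ₙᵀΨ⁻¹)`, which the second factor annihilates because `1ₙᵀ L = 0`.
-/

lemma isUnit_det_diagonal {ι K : Type*} [Fintype ι] [DecidableEq ι] [Field K] {d : ι → K}
    (hd : ∀ i, d i ≠ 0) : IsUnit (diagonal d).det := by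
  rw [det_diagonal]
  exact (Finset.prod_ne_zero_iff.mpr fun i _ => hd i).isUnit

section BlockTransvection

variable {l m p q α : Type*} [Fintype l] [Fintype m] [DecidableEq l] [DecidableEq m]
  [Semiring α]

/-- The block unitriangular matrix `[[1, 0], [K, 1]]`; multiplying by it on the left adds `K` times
the first block row to the second. -/
def blockTransvection (K : Matrix l m α) : Matrix (m ⊕ l) (m ⊕ l) α :=
  fromBlocks 1 0 K 1

lemma blockTransvection_mul_fromBlocks (K : Matrix l m α) (A : Matrix m p α) (B : Matrix m q α)
    (C : Matrix l p α) (E : Matrix l q α) :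
    blockTransvection K * fromBlocks A B C E = fromBlocks A B (K * A + C) (K * B + E) := by
  simp [blockTransvection, fromBlocks_multiply]

lemma sumElim_vecMul_blockTransvection (K : Matrix l m α) (v : m → α) (w : l → α) :
    Sum.elim v w ᵥ* blockTransvection K = Sum.elim (v + w ᵥ* K) w := by
  simp [blockTransvection, vecMul_fromBlocks]

end BlockTransvection

section ClosedLoop

variable {ι α : Type*} [Fintype ι] [DecidableEq ι]

/-- The closed-loop matrix `A_c` of a DC microgrid under distributed cooperative droop control.
The arguments `T` and `S` stand for `D⁻¹` and `Υ⁻¹`, so that no inverse occurs in the definition. -/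
def closedLoopMatrix [Ring α] (T Y R L S Φ Ψ : Matrix ι ι α) : Matrix (ι ⊕ ι) (ι ⊕ ι) α :=
  fromBlocks
    (-(T * (1 + Y * R))) (T * Y)
    (-(Ψ * L * S) + Φ * L * S * T * (1 + Y * R)) (-(Φ * L * S * T * Y))

lemma closedLoopMatrix_eq_mul [Ring α] (T Y R L S Φ Ψ : Matrix ι ι α) :
    closedLoopMatrix T Y R L S Φ Ψ =
      blockTransvection (-(Φ * L * S)) *
        fromBlocks (-(T * (1 + Y * R))) (T * Y) (-(Ψ * L * S)) 0 := by
  rw [blockTransvection_mul_fromBlocks, closedLoopMatrix, neg_mul_neg, Matrix.neg_mul, add_zero,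
    add_comm (-(Ψ * L * S)), Matrix.mul_assoc _ T, Matrix.mul_assoc _ T]

lemma closedLoopMatrix_mulVec_eq_zero [Ring α] (T Φ Ψ : Matrix ι ι α) {Y R L S : Matrix ι ι α}
    {x y : ι → α} (hy : Y *ᵥ y = (1 + Y * R) *ᵥ x) (hx : L *ᵥ (S *ᵥ x) = 0) :
    closedLoopMatrix T Y R L S Φ Ψ *ᵥ Sum.elim x y = 0 := by
  have top : -(T * (1 + Y * R)) *ᵥ x + (T * Y) *ᵥ y = 0 := by
    rw [neg_mulVec, ← mulVec_mulVec, ← mulVec_mulVec, hy, neg_add_cancel]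
  have bottom : -(Ψ * L * S) *ᵥ x = 0 := by
    rw [neg_mulVec, ← mulVec_mulVec, ← mulVec_mulVec, hx, mulVec_zero, neg_zero]
  rw [closedLoopMatrix_eq_mul, ← mulVec_mulVec, fromBlocks_mulVec, Sum.elim_comp_inl,
    Sum.elim_comp_inr, top, bottom, zero_mulVec, add_zero, Sum.elim_zero_zero, mulVec_zero]

lemma vecMul_closedLoopMatrix_eq_zero [Ring α] (T Y R S Φ : Matrix ι ι α) {L Ψ : Matrix ι ι α}
    {w : ι → α} (hw : (w ᵥ* Ψ) ᵥ* L = 0) :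
    Sum.elim (w ᵥ* (Φ * L * S)) w ᵥ* closedLoopMatrix T Y R L S Φ Ψ = 0 := by
  have left : w ᵥ* -(Ψ * L * S) = 0 := by
    rw [vecMul_neg, ← vecMul_vecMul, ← vecMul_vecMul, hw, zero_vecMul, neg_zero]
  rw [closedLoopMatrix_eq_mul, ← vecMul_vecMul, sumElim_vecMul_blockTransvection, vecMul_neg,
    add_neg_cancel, vecMul_fromBlocks, Sum.elim_comp_inl, Sum.elim_comp_inr, left]
  simp only [zero_vecMul, vecMul_zero, add_zero, Sum.elim_zero_zero]

theorem closedLoop_zero_eigenvectors_general [CommRing α] (T R : Matrix ι ι α)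
    {Y L Υ Φ Ψ : Matrix ι ι α} (hY : IsUnit Y.det) (hΥ : IsUnit Υ.det) (hΨ : IsUnit Ψ.det)
    (hLsymm : L.IsSymm) (hΥsymm : Υ.IsSymm) (hΦsymm : Φ.IsSymm) (hΨsymm : Ψ.IsSymm)
    {u : ι → α} (hLu : L *ᵥ u = 0) :
    closedLoopMatrix T Y R L Υ⁻¹ Φ Ψ *ᵥ Sum.elim (Υ *ᵥ u) (((Y⁻¹ + R) * Υ) *ᵥ u) = 0 ∧
      (closedLoopMatrix T Y R L Υ⁻¹ Φ Ψ)ᵀ *ᵥ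
        Sum.elim ((Υ⁻¹ * L * Φ * Ψ⁻¹) *ᵥ u) (Ψ⁻¹ *ᵥ u) = 0 := by
  constructor
  · apply closedLoopMatrix_mulVec_eq_zero
    · rw [mulVec_mulVec, mulVec_mulVec, ← Matrix.mul_assoc, Matrix.mul_add,
        mul_nonsing_inv Y hY]
    · rw [mulVec_mulVec u, nonsing_inv_mul Υ hΥ, one_mulVec, hLu]
  · have proportional_part :
        (Υ⁻¹ * L * Φ * Ψ⁻¹) *ᵥ u = (Ψ⁻¹ *ᵥ u) ᵥ* (Φ * L * Υ⁻¹) := by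
      rw [← mulVec_transpose, transpose_mul, transpose_mul, hΥsymm.inv.eq, hLsymm.eq, hΦsymm.eq,
        mulVec_mulVec, Matrix.mul_assoc Υ⁻¹]
    have integral_part : ((Ψ⁻¹ *ᵥ u) ᵥ* Ψ) ᵥ* L = 0 := by
      rw [← mulVec_transpose Ψ, hΨsymm.eq, mulVec_mulVec, mul_nonsing_inv Ψ hΨ, one_mulVec,
        ← mulVec_transpose, hLsymm.eq, hLu]
    rw [mulVec_transpose, proportional_part]
    exact vecMul_closedLoopMatrix_eq_zero T Y R Υ⁻¹ Φ integral_part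

end ClosedLoop

/-- `v_r = (Υ1ₙ, (Y⁻¹+R)Υ1ₙ)` is a right eigenvector and
`v_l = (Υ⁻¹LΦΨ⁻¹1ₙ, Ψ⁻¹1ₙ)` a left eigenvector of the closed-loop matrix `A_c`
associated with the eigenvalue `0`. -/
theorem closedLoop_zero_eigenvectors
    (n : ℕ) (hn : 0 < n)
    (Y : Matrix (Fin n) (Fin n) ℝ) (hYunit : IsUnit Y.det)
    (L : Matrix (Fin n) (Fin n) ℝ) (hLsym : L.IsSymm)
    (hL1 : L *ᵥ (fun _ => (1 : ℝ)) = 0)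
    (d r υ φv ψv : Fin n → ℝ)
    (hd : ∀ i, d i ≠ 0) (hυ : ∀ i, υ i ≠ 0) (hψ : ∀ i, ψv i ≠ 0)
    (D R Υ Φ Ψ : Matrix (Fin n) (Fin n) ℝ)
    (hD : D = Matrix.diagonal d) (hR : R = Matrix.diagonal r)
    (hΥ : Υ = Matrix.diagonal υ) (hΦ : Φ = Matrix.diagonal φv)
    (hΨ : Ψ = Matrix.diagonal ψv)
    (A_c : Matrix (Fin n ⊕ Fin n) (Fin n ⊕ Fin n) ℝ)
    (hA : A_c = Matrix.fromBlocks
      (-(D⁻¹ * (1 + Y * R))) (D⁻¹ * Y)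
      (-(Ψ * L * Υ⁻¹) + Φ * L * Υ⁻¹ * D⁻¹ * (1 + Y * R)) (-(Φ * L * Υ⁻¹ * D⁻¹ * Y)))
    (v_r v_l : Fin n ⊕ Fin n → ℝ)
    (hvr : v_r = Sum.elim (Υ *ᵥ (fun _ => (1 : ℝ)))
      (((Y⁻¹ + R) * Υ) *ᵥ (fun _ => (1 : ℝ))))
    (hvl : v_l = Sum.elim ((Υ⁻¹ * L * Φ * Ψ⁻¹) *ᵥ (fun _ => (1 : ℝ)))
      (Ψ⁻¹ *ᵥ (fun _ => (1 : ℝ)))) :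
    A_c *ᵥ v_r = 0 ∧ A_cᵀ *ᵥ v_l = 0 := by
  subst hD hR hΥ hΦ hΨ hA hvr hvl
  exact closedLoop_zero_eigenvectors_general _ _ hYunit (isUnit_det_diagonal hυ)
    (isUnit_det_diagonal hψ) hLsym (isSymm_diagonal υ) (isSymm_diagonal φv) (isSymm_diagonal ψv) hL1
end

section
/- Let n ≥ 2, let Y be a real symmetric positive definite n×n matrix whose inverse Y⁻¹ has all entries strictly positive, let r > 0, β > 0, set R = rE and Ψ = βE, let Υ = diag(I_1^max,…,I_n^max) with I_k^max > 0, and let Uᵈ(0) ∈ ℝⁿ be entrywise nonnegative and not identically zero. Let λ_n denote the largest eigenvalue of Y and define r_{c1} = 1ₙᵀΨ⁻¹Uᵈ(0) / 1ₙᵀΨ⁻¹(Y⁻¹+R)Υ·1ₙ. Then r_{c1} < ( Σ_k U_k^d(0) / Σ_k I_k^max ) · λ_n/(1 + λ_n·r). -/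
open Matrix

/-!
Since `Ψ` is scalar it cancels, and `r_{c1} = (∑ₖ Uₖ) / (1ᵀ Y⁻¹ I + r ∑ₖ Iₖ)`, so it suffices that
`1ᵀ Y⁻¹ I > (∑ₖ Iₖ) / λₙ`.
The Cauchy–Schwarz inequality for the form `Y`, applied to `eⱼ` and `Y⁻¹ eⱼ`, gives
`(Y⁻¹)ⱼⱼ ≥ 1 / Yⱼⱼ ≥ 1 / λₙ`; the diagonal of `Y⁻¹` thus already contributes `(∑ₖ Iₖ) / λₙ`, and a
positive off-diagonal entry of `Y⁻¹` makes the inequality strict.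
-/

section CooperativeRatio

variable {ι : Type*} [Fintype ι]

theorem sum_diag_mul_lt_one_dotProduct_mulVec {α : Type*} [Semiring α] [PartialOrder α]
    [IsStrictOrderedRing α] {A : Matrix ι ι α} {v : ι → α} (hA : ∀ i j, 0 ≤ A i j)
    (hv : ∀ j, 0 ≤ v j) (hpos : ∃ i j, i ≠ j ∧ 0 < A i j ∧ 0 < v j) :
    ∑ i, A i i * v i < 1 ⬝ᵥ A *ᵥ v := by
  obtain ⟨i, j, hij, hAij, hvj⟩ := hpos
  have hterm : ∀ k l, 0 ≤ A k l * v l := fun k l => mul_nonneg (hA k l) (hv l)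
  rw [one_dotProduct]
  refine Finset.sum_lt_sum
    (fun k _ => Finset.single_le_sum (fun l _ => hterm k l) (Finset.mem_univ k))
    ⟨i, Finset.mem_univ i, ?_⟩
  exact Finset.single_lt_sum hij.symm (Finset.mem_univ i) (Finset.mem_univ j)
    (mul_pos hAij hvj) fun l _ _ => hterm i l

theorem sq_dotProduct_mulVec_le_of_posSemidef {A : Matrix ι ι ℝ} (hA : A.PosSemidef)
    (x y : ι → ℝ) : (x ⬝ᵥ A *ᵥ y) ^ 2 ≤ (x ⬝ᵥ A *ᵥ x) * (y ⬝ᵥ A *ᵥ y) := by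
  classical
  have hnonneg : ∀ z, 0 ≤ A.toBilin' z z := fun z => by
    simpa only [toBilin'_apply', star_trivial] using hA.dotProduct_mulVec_nonneg z
  have hsymm : A.toBilin'.IsSymm :=
    isSymm_toBilin'_iff_isSymm.mpr (isHermitian_iff_isSymm.mp hA.isHermitian)
  simpa only [toBilin'_apply'] using
    A.toBilin'.apply_sq_le_of_symm hnonneg (LinearMap.BilinForm.isSymm_iff.mp hsymm) x y

variable [DecidableEq ι]

open scoped ComplexOrder MatrixOrder in
theorem re_diag_le_of_eigenvalues_le {𝕜 : Type*} [RCLike 𝕜] {A : Matrix ι ι 𝕜}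
    (hA : A.IsHermitian) {c : ℝ} (hc : ∀ i, hA.eigenvalues i ≤ c) (j : ι) :
    RCLike.re (A j j) ≤ c := by
  have hspectrum : ∀ x ∈ spectrum ℝ A, x ≤ c := by
    simpa only [hA.spectrum_real_eq_range_eigenvalues, Set.forall_mem_range] using hc
  have hloewner : A ≤ algebraMap ℝ (Matrix ι ι 𝕜) c :=
    le_algebraMap_of_spectrum_le hspectrum hA.isSelfAdjoint
  have hdiag := (RCLike.nonneg_iff.mp ((Matrix.le_iff.mp hloewner).diag_nonneg (i := j))).1
  simpa [algebraMap_eq_diagonal] using hdiag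

theorem sq_dotProduct_le_mul_inv_of_posDef {A : Matrix ι ι ℝ} (hA : A.PosDef) (x y : ι → ℝ) :
    (x ⬝ᵥ y) ^ 2 ≤ (x ⬝ᵥ A *ᵥ x) * (y ⬝ᵥ A⁻¹ *ᵥ y) := by
  have hcancel : A *ᵥ A⁻¹ *ᵥ y = y := by
    rw [mulVec_mulVec, mul_nonsing_inv A hA.det_pos.ne'.isUnit, one_mulVec]
  simpa only [hcancel, dotProduct_comm (A⁻¹ *ᵥ y) y] using
    sq_dotProduct_mulVec_le_of_posSemidef hA.posSemidef x (A⁻¹ *ᵥ y)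

theorem inv_diag_le_diag_inv_of_posDef {A : Matrix ι ι ℝ} (hA : A.PosDef) (j : ι) :
    (A j j)⁻¹ ≤ A⁻¹ j j := by
  have hone_le : 1 ≤ A j j * A⁻¹ j j := by
    simpa using sq_dotProduct_le_mul_inv_of_posDef hA (Pi.single j 1) (Pi.single j 1)
  exact (inv_le_iff_one_le_mul₀' hA.diag_pos).mpr hone_le

theorem sum_div_lt_one_dotProduct_inv_mulVec {Y : Matrix ι ι ℝ} (hY : Y.PosDef)
    (hYinv : ∀ i j, 0 ≤ Y⁻¹ i j) {d : ℝ} (hd : ∀ j, Y j j ≤ d) {v : ι → ℝ} (hv : ∀ j, 0 ≤ v j)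
    (hpos : ∃ i j, i ≠ j ∧ 0 < Y⁻¹ i j ∧ 0 < v j) :
    (∑ j, v j) / d < 1 ⬝ᵥ Y⁻¹ *ᵥ v := by
  have hdiag : ∀ j, d⁻¹ ≤ Y⁻¹ j j := fun j =>
    (inv_anti₀ hY.diag_pos (hd j)).trans (inv_diag_le_diag_inv_of_posDef hY j)
  calc (∑ j, v j) / d = ∑ j, d⁻¹ * v j := by rw [div_eq_inv_mul, Finset.mul_sum]
    _ ≤ ∑ j, Y⁻¹ j j * v j :=
      Finset.sum_le_sum fun j _ => mul_le_mul_of_nonneg_right (hdiag j) (hv j)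
    _ < 1 ⬝ᵥ Y⁻¹ *ᵥ v := sum_diag_mul_lt_one_dotProduct_mulVec hYinv hv hpos

/-- The steady current ratio `r_{c1} = 1ᵀΨ⁻¹U / 1ᵀΨ⁻¹(Y⁻¹ + R)Υ1` reached by the cooperative droop
control from the initial rated voltages `U`. It takes the value `0` when the denominator
vanishes. -/
noncomputable def cooperativeRatio {K : Type*} [Field K] (Y R Ψ Υ : Matrix ι ι K) (U : ι → K) : K :=
  (1 ⬝ᵥ Ψ⁻¹ *ᵥ U) / (1 ⬝ᵥ Ψ⁻¹ *ᵥ ((Y⁻¹ + R) * Υ) *ᵥ 1)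

theorem cooperativeRatio_smul_one_smul_one_diagonal {K : Type*} [Field K] (Y : Matrix ι ι K)
    (r : K) {β : K} (hβ : β ≠ 0) (I U : ι → K) :
    cooperativeRatio Y (r • 1) (β • 1) (diagonal I) U =
      (∑ k, U k) / (1 ⬝ᵥ Y⁻¹ *ᵥ I + r * ∑ k, I k) := by
  have hΨ : (β • (1 : Matrix ι ι K))⁻¹ = β⁻¹ • 1 :=
    inv_eq_right_inv (by rw [smul_mul_smul_comm, mul_inv_cancel₀ hβ, one_mul, one_smul])
  have hΥ : diagonal I *ᵥ 1 = I := by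
    ext k
    simp [mulVec_diagonal]
  have hcurrent : 1 ⬝ᵥ ((Y⁻¹ + r • 1) * diagonal I) *ᵥ 1 = 1 ⬝ᵥ Y⁻¹ *ᵥ I + r * ∑ k, I k := by
    rw [← mulVec_mulVec, hΥ, add_mulVec, smul_mulVec, one_mulVec, dotProduct_add, dotProduct_smul,
      one_dotProduct I, smul_eq_mul]
  simp only [cooperativeRatio, hΨ, smul_mulVec, one_mulVec, dotProduct_smul, smul_eq_mul, hcurrent,
    one_dotProduct U]
  exact mul_div_mul_left _ _ (inv_ne_zero hβ)

theorem cooperative_ratio_upper_bound_general {Y : Matrix ι ι ℝ} (hY : Y.PosDef)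
    (hYinv : ∀ i j, 0 ≤ Y⁻¹ i j) {d : ℝ} (hd : ∀ j, Y j j ≤ d) {r β : ℝ} (hr : 0 < 1 + d * r)
    (hβ : β ≠ 0) {I U : ι → ℝ} (hI : ∀ k, 0 ≤ I k)
    (hpos : ∃ i j, i ≠ j ∧ 0 < Y⁻¹ i j ∧ 0 < I j) (hU : 0 < ∑ k, U k) :
    cooperativeRatio Y (r • 1) (β • 1) (diagonal I) U <
      (∑ k, U k) / (∑ k, I k) * (d / (1 + d * r)) := by
  have hsum := sum_div_lt_one_dotProduct_inv_mulVec hY hYinv hd hI hpos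
  obtain ⟨-, j, -, -, hIj⟩ := hpos
  have hd_pos : 0 < d := hY.diag_pos.trans_le (hd j)
  have hI_pos : 0 < ∑ k, I k := Finset.sum_pos' (fun k _ => hI k) ⟨j, Finset.mem_univ j, hIj⟩
  have hden : (∑ k, I k) / d + r * ∑ k, I k = (∑ k, I k) * (1 + d * r) / d := by
    field_simp
  calc cooperativeRatio Y (r • 1) (β • 1) (diagonal I) U
      = (∑ k, U k) / (1 ⬝ᵥ Y⁻¹ *ᵥ I + r * ∑ k, I k) :=
        cooperativeRatio_smul_one_smul_one_diagonal Y r hβ I U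
    _ < (∑ k, U k) / ((∑ k, I k) / d + r * ∑ k, I k) :=
        div_lt_div_of_pos_left hU (hden ▸ by positivity) (by gcongr)
    _ = (∑ k, U k) / (∑ k, I k) * (d / (1 + d * r)) := by
        rw [hden, div_div_eq_mul_div, div_mul_div_comm]

end CooperativeRatio

/-- Upper bound on the cooperative steady current ratio in terms of the
largest eigenvalue `λₙ` of the conductance matrix `Y`:
`r_{c1} < (Σₖ Uₖᵈ(0) / Σₖ Iₖ^max) · λₙ/(1 + λₙ r)`. -/
theorem cooperative_ratio_upper_bound
    (n : ℕ) (hn : 2 ≤ n)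
    (Y : Matrix (Fin n) (Fin n) ℝ) (hYpd : Y.PosDef)
    (hYinvpos : ∀ i j, 0 < Y⁻¹ i j)
    (r β : ℝ) (hr : 0 < r) (hβ : 0 < β)
    (R Ψ : Matrix (Fin n) (Fin n) ℝ)
    (hR : R = r • (1 : Matrix (Fin n) (Fin n) ℝ))
    (hΨ : Ψ = β • (1 : Matrix (Fin n) (Fin n) ℝ))
    (Imax : Fin n → ℝ) (hImax : ∀ k, 0 < Imax k)
    (Υ : Matrix (Fin n) (Fin n) ℝ) (hΥ : Υ = Matrix.diagonal Imax)
    (Ud0 : Fin n → ℝ) (hUd0nn : ∀ k, 0 ≤ Ud0 k) (hUd0ne : Ud0 ≠ 0)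
    (lam : ℝ)
    (hlam : lam = Finset.univ.sup' ⟨⟨0, by omega⟩, Finset.mem_univ _⟩
      hYpd.1.eigenvalues)
    (rc1 : ℝ)
    (hrc1 : rc1 = ((fun _ => (1 : ℝ)) ⬝ᵥ (Ψ⁻¹ *ᵥ Ud0)) /
      ((fun _ => (1 : ℝ)) ⬝ᵥ (Ψ⁻¹ *ᵥ (((Y⁻¹ + R) * Υ) *ᵥ (fun _ => (1 : ℝ)))))) :
    rc1 < ((∑ k, Ud0 k) / (∑ k, Imax k)) * (lam / (1 + lam * r)) := by
  subst hR hΨ hΥ hrc1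
  have hdiag : ∀ j, Y j j ≤ lam :=
    re_diag_le_of_eigenvalues_le hYpd.1 fun i => hlam ▸ Finset.le_sup' _ (Finset.mem_univ i)
  have hlam_pos : 0 < lam := hYpd.diag_pos.trans_le (hdiag ⟨0, by omega⟩)
  have hcoupled : ∃ i j, i ≠ j ∧ 0 < Y⁻¹ i j ∧ 0 < Imax j :=
    ⟨⟨0, by omega⟩, ⟨1, by omega⟩, by simp, hYinvpos _ _, hImax _⟩
  exact cooperative_ratio_upper_bound_general hYpd (fun i j => (hYinvpos i j).le) hdiag
    (by positivity) hβ.ne' (fun k => (hImax k).le) hcoupled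
    (Fintype.sum_pos (lt_of_le_of_ne hUd0nn hUd0ne.symm))
end
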